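/- The monodromy matrix M = R₂₁·R ∈ Q⊗Q (where R₂₁ denotes the tensor flip of R) equals the explicit sum M = (1/4)·Σ_{m,n∈{0,1}} Σ_{r,s∈{0,1,2,3}} (β²/i)^{rs + m(r+s+1)} · (2i)^{m+n} · i^{−m² − ms + 2ns − 2nr − rs + mr} · (F^m E^n K^s) ⊗ (E^m F^n K^r). -/

import Mathlib

open TensorProduct

set_option maxHeartbeats 1000000
set_option synthInstance.maxHeartbeats 400000

noncomputable section

/-- Generators of the restricted quantum group `Q = \bar U_i sl(2)`. -/
inductive QGen : Type
  | E | F | K | Kinv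
deriving DecidableEq

/-- The free algebra on the generators. -/
abbrev FA : Type := FreeAlgebra ℂ QGen

def ιE : FA := FreeAlgebra.ι ℂ QGen.E
def ιF : FA := FreeAlgebra.ι ℂ QGen.F
def ιK : FA := FreeAlgebra.ι ℂ QGen.K
def ιKi : FA := FreeAlgebra.ι ℂ QGen.Kinv

/-- Defining relations of `\bar U_i sl(2)` (at `q = i`, i.e. `p = 2`). -/
inductive QRel : FA → FA → Prop
  | KKi : QRel (ιK * ιKi) 1
  | KiK : QRel (ιKi * ιK) 1
  | KEKi : QRel (ιK * ιE * ιKi) (-ιE)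
  | KFKi : QRel (ιK * ιF * ιKi) (-ιF)
  | EF : QRel (ιE * ιF - ιF * ιE) ((2 * Complex.I)⁻¹ • (ιK - ιKi))
  | Esq : QRel (ιE ^ 2) 0
  | Fsq : QRel (ιF ^ 2) 0
  | K4 : QRel (ιK ^ 4) 1

/-- The restricted quantum group `\bar U_i sl(2)`: the quotient of the free algebra
by the two-sided ideal generated by the defining relations. -/
abbrev Q : Type := RingQuot QRel

def gE : Q := RingQuot.mkAlgHom ℂ QRel ιE
def gF : Q := RingQuot.mkAlgHom ℂ QRel ιF
def gK : Q := RingQuot.mkAlgHom ℂ QRel ιK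
def gKi : Q := RingQuot.mkAlgHom ℂ QRel ιKi

section Gadgets

variable (k : Type) [Field k] (A : Type) [Ring A] [Algebra k A]

abbrev TP2 : Type := A ⊗[k] A
abbrev TP3 : Type := A ⊗[k] (A ⊗[k] A)
abbrev TP4 : Type := A ⊗[k] (A ⊗[k] (A ⊗[k] A))

/-- Multiplication `a ⊗ b ↦ a * b`. -/
def mulA : TP2 k A →ₗ[k] A := LinearMap.mul' k A

/-- Tensor flip `a ⊗ b ↦ b ⊗ a`. -/
def flipA : TP2 k A →ₗ[k] TP2 k A := (TensorProduct.comm k A A).toLinearMap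

/-- `a ↦ a ⊗ 1`. -/
def lTen : A →ₗ[k] TP2 k A := (TensorProduct.mk k A A).flip 1

/-- `a ↦ 1 ⊗ a`. -/
def rTen : A →ₗ[k] TP2 k A := TensorProduct.mk k A A 1

/-- `a ⊗ b ↦ a ⊗ b ⊗ 1`. -/
def emb12 : TP2 k A →ₗ[k] TP3 k A := TensorProduct.map LinearMap.id (lTen k A)

/-- `a ⊗ b ↦ a ⊗ 1 ⊗ b`. -/
def emb13 : TP2 k A →ₗ[k] TP3 k A := TensorProduct.map LinearMap.id (rTen k A)

/-- `a ⊗ b ↦ 1 ⊗ a ⊗ b`. -/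
def emb23 : TP2 k A →ₗ[k] TP3 k A := TensorProduct.mk k A (TP2 k A) 1

/-- `a ⊗ b ⊗ c ↦ a ⊗ c ⊗ b`. -/
def perm132 : TP3 k A →ₗ[k] TP3 k A := TensorProduct.map LinearMap.id (flipA k A)

/-- `a ⊗ b ⊗ c ↦ b ⊗ c ⊗ a`. -/
def perm231 : TP3 k A →ₗ[k] TP3 k A :=
  (TensorProduct.assoc k A A A).toLinearMap ∘ₗ (TensorProduct.comm k A (TP2 k A)).toLinearMap

/-- `a ⊗ b ⊗ c ↦ c ⊗ a ⊗ b`. -/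
def perm312 : TP3 k A →ₗ[k] TP3 k A :=
  (TensorProduct.comm k (TP2 k A) A).toLinearMap ∘ₗ (TensorProduct.assoc k A A A).symm.toLinearMap

/-- `a ⊗ b ⊗ c ↦ b ⊗ a ⊗ c`. -/
def perm213 : TP3 k A →ₗ[k] TP3 k A :=
  (TensorProduct.assoc k A A A).toLinearMap ∘ₗ
    (TensorProduct.map (flipA k A) LinearMap.id) ∘ₗ (TensorProduct.assoc k A A A).symm.toLinearMap

variable {k A}

/-- `(Δ ⊗ id)` on two tensor factors, landing in the triple tensor product. -/
def copL (D : A →ₐ[k] TP2 k A) : TP2 k A →ₗ[k] TP3 k A :=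
  (TensorProduct.assoc k A A A).toLinearMap ∘ₗ TensorProduct.map D.toLinearMap LinearMap.id

/-- `(id ⊗ Δ)` on two tensor factors. -/
def copR (D : A →ₐ[k] TP2 k A) : TP2 k A →ₗ[k] TP3 k A :=
  TensorProduct.map LinearMap.id D.toLinearMap

/-- `(ε ⊗ id) : A ⊗ A → A`. -/
def cuL (ce : A →ₐ[k] k) : TP2 k A →ₗ[k] A :=
  (TensorProduct.lid k A).toLinearMap ∘ₗ TensorProduct.map ce.toLinearMap LinearMap.id

/-- `(id ⊗ ε) : A ⊗ A → A`. -/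
def cuR (ce : A →ₐ[k] k) : TP2 k A →ₗ[k] A :=
  (TensorProduct.rid k A).toLinearMap ∘ₗ TensorProduct.map LinearMap.id ce.toLinearMap

/-- `(id ⊗ ε ⊗ id) : A ⊗ A ⊗ A → A ⊗ A`. -/
def cuMid (ce : A →ₐ[k] k) : TP3 k A →ₗ[k] TP2 k A :=
  TensorProduct.map LinearMap.id (cuL ce)

/-- `(Δ ⊗ id ⊗ id)`. -/
def cop4_1 (D : A →ₐ[k] TP2 k A) : TP3 k A →ₗ[k] TP4 k A :=
  (TensorProduct.assoc k A A (TP2 k A)).toLinearMap ∘ₗ TensorProduct.map D.toLinearMap LinearMap.id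

/-- `(id ⊗ Δ ⊗ id)`. -/
def cop4_2 (D : A →ₐ[k] TP2 k A) : TP3 k A →ₗ[k] TP4 k A :=
  TensorProduct.map LinearMap.id (copL D)

/-- `(id ⊗ id ⊗ Δ)`. -/
def cop4_3 (D : A →ₐ[k] TP2 k A) : TP3 k A →ₗ[k] TP4 k A :=
  TensorProduct.map LinearMap.id (copR D)

/-- `a ⊗ b ⊗ c ↦ a ⊗ b ⊗ c ⊗ 1`, i.e. `Φ ↦ Φ ⊗ 1`. -/
def pad4 : TP3 k A →ₗ[k] TP4 k A :=
  TensorProduct.map LinearMap.id (TensorProduct.map LinearMap.id (lTen k A))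

/-- `a ⊗ b ⊗ c ↦ f(a) * g(b) * h(c)`. -/
def tmap3 (f g h : A →ₗ[k] A) : TP3 k A →ₗ[k] A :=
  mulA k A ∘ₗ TensorProduct.map f (mulA k A ∘ₗ TensorProduct.map g h)

/-- `a ⊗ b ↦ S(a) * b`, used in the antipode axiom `m ∘ (S ⊗ id) ∘ Δ = 1·ε`. -/
def antipL (s : A →ₗ[k] A) : TP2 k A →ₗ[k] A := mulA k A ∘ₗ TensorProduct.map s LinearMap.id

/-- `a ⊗ b ↦ a * S(b)`. -/
def antipR (s : A →ₗ[k] A) : TP2 k A →ₗ[k] A := mulA k A ∘ₗ TensorProduct.map LinearMap.id s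

end Gadgets

/-- Central idempotent `e₀ = (1 + K²)/2`. -/
def e0 : Q := (2:ℂ)⁻¹ • (1 + gK ^ 2)

/-- Central idempotent `e₁ = (1 − K²)/2`. -/
def e1 : Q := (2:ℂ)⁻¹ • (1 - gK ^ 2)

/-- `f⁺ = −i F`. -/
def fp : Q := (-Complex.I) • gF

/-- `f⁻ = E K⁻¹`. -/
def fm : Q := gE * gKi

/-- The Casimir element `C = FE − (i/4)(K − K⁻¹)`. -/
def Cas : Q := gF * gE - (Complex.I / 4) • (gK - gKi)

def t2 (a b : Q) : TP2 ℂ Q := a ⊗ₜ[ℂ] b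

def t3 (a b c : Q) : TP3 ℂ Q := a ⊗ₜ[ℂ] (b ⊗ₜ[ℂ] c)

def eEF : Q := gE * gF
def eEK : Q := gE * gK
def eFK : Q := gF * gK
def eEFK : Q := gE * gF * gK

/-- `Φ^{010}` component of the coassociator. -/
def Phi010 : TP3 ℂ Q :=
  t3 1 1 1 - (1 + Complex.I) • t3 gE gK gF + (1 - Complex.I) • t3 eFK gK eEK
    + (2:ℂ) • t3 eEFK 1 eEFK

/-- `Φ^{101}` component of the coassociator. -/
def Phi101 : TP3 ℂ Q :=
  (Complex.I - 1) • t3 1 gF eEK + t3 1 gK 1 + (2:ℂ) • t3 1 eEF eEFK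
    - (1 + Complex.I) • t3 1 eEK gF - (1 + Complex.I) • t3 gE eFK 1
    + (2 * Complex.I) • t3 gE eEFK gF + (1 - Complex.I) • t3 eFK gE 1
    - (2 * Complex.I) • t3 eFK eEFK eEK - (2:ℂ) • t3 eEFK eEF 1

/-- `Φ^{111}` component of the coassociator. -/
def Phi111 (β : ℂ) : TP3 ℂ Q :=
  (Complex.I * β ^ 2) • (
    (1 + Complex.I) • t3 1 gF eEK - t3 1 gK 1 - (2:ℂ) • t3 1 eEF 1
      - (2 * Complex.I) • t3 1 eEF eEFK + (1 + Complex.I) • t3 1 eEK gF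
      - (1 + Complex.I) • t3 gE 1 gF + (1 + Complex.I) • t3 gE eFK 1
      + (2 * Complex.I) • t3 gE eFK eEFK + (2:ℂ) • t3 gE eEFK gF
      - (1 + Complex.I) • t3 eFK 1 eEK + (1 + Complex.I) • t3 eFK gE 1
      + (2 * Complex.I) • t3 eFK gE eEFK + (2:ℂ) • t3 eFK eEFK eEK
      + (2 * Complex.I) • t3 eEFK gF eEK + (2 * Complex.I) • t3 eEFK gK eEFK
      - (2 * Complex.I) • t3 eEFK eEF 1 + (2 * Complex.I) • t3 eEFK eEK gF
      + (4:ℂ) • t3 eEFK eEF eEFK)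

/-- The coassociator `Φ` of the quasi-Hopf algebra structure on `Q`. -/
def Phi (β : ℂ) : TP3 ℂ Q :=
  t3 e0 e0 e0 + t3 e1 e0 e0 + Phi010 * t3 e0 e1 e0 + t3 e0 e0 e1
    + t3 e1 e1 e0 + Phi101 * t3 e1 e0 e1 + t3 e0 e1 e1 + Phi111 β * t3 e1 e1 e1

def R00 : TP2 ℂ Q :=
  (2:ℂ)⁻¹ • ((t2 1 1 + t2 1 gK + t2 gK 1 - t2 gK gK) * (t2 1 1 + (2 * Complex.I) • t2 gE gF))

def R01 : TP2 ℂ Q :=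
  (2:ℂ)⁻¹ • ((t2 1 1 - Complex.I • t2 1 gK + t2 gK 1 + Complex.I • t2 gK gK) *
    (t2 1 1 + (1 - Complex.I) • t2 eFK eEK - (1 - Complex.I) • t2 gE gF
      + (1 + Complex.I) • t2 eEFK 1 + (2 * Complex.I) • t2 eEFK eEFK))

def R10 : TP2 ℂ Q :=
  (2:ℂ)⁻¹ • ((t2 1 1 + t2 1 gK - Complex.I • t2 gK 1 + Complex.I • t2 gK gK) *
    (t2 1 gK + (1 - Complex.I) • t2 eFK gE + (1 - Complex.I) • t2 gE eFK
      - (1 - Complex.I) • t2 1 eEF - (2 * Complex.I) • t2 eEFK eEF))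

def R11 (β : ℂ) : TP2 ℂ Q :=
  (β / 2) • ((t2 1 1 - Complex.I • t2 1 gK - Complex.I • t2 gK 1 + t2 gK gK) *
    ((-Complex.I) • t2 gK 1 + (2 * Complex.I) • t2 eEK gF + (1 - Complex.I) • t2 gK eEFK
      - (1 + Complex.I) • t2 eEF 1 - (2 * Complex.I) • t2 eEF eEFK))

/-- The universal R-matrix `R` of the quasi-triangular quasi-Hopf structure on `Q`. -/
def Rmat (β : ℂ) : TP2 ℂ Q :=
  R00 * t2 e0 e0 + R01 * t2 e0 e1 + R10 * t2 e1 e0 + R11 β * t2 e1 e1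

/-- The standard R-matrix `R_st` of the quotient `Q/(K²-1)`. -/
def Rst : TP2 ℂ Q :=
  (2:ℂ)⁻¹ • ∑ m ∈ Finset.range 2, ∑ n ∈ Finset.range 2,
    ((-1:ℂ) ^ (m * n)) • (t2 (gK ^ m) (gK ^ n) * (t2 1 1 + (2 * Complex.I) • t2 gE gF))

/-- The monodromy matrix `M = R₂₁ · R`. -/
def Mmat (β : ℂ) : TP2 ℂ Q := flipA ℂ Q (Rmat β) * Rmat β

/-- The ribbon element `v = (e₀ − iβ K e₁)(1 − 2 f⁺ f⁻)`. -/
def vRib (β : ℂ) : Q := (e0 - (Complex.I * β) • (gK * e1)) * (1 - (2:ℂ) • (fp * fm))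

/-- The coevaluation element `β = e₀ − 2iβ² C e₁`. -/
def bbEl (β : ℂ) : Q := e0 - (2 * Complex.I * β ^ 2) • (Cas * e1)

/-- `b ⊗ c ↦ S(b · bb · S(c))`, inner part of the Drinfeld element. -/
def uInner (S : Q →ₗ[ℂ] Q) (bb : Q) : TP2 ℂ Q →ₗ[ℂ] Q :=
  S ∘ₗ mulA ℂ Q ∘ₗ TensorProduct.map (LinearMap.mulRight ℂ bb) S

/-- `Φ' ⊗ Φ'' ⊗ Φ''' ↦ S(Φ'' · bb · S(Φ''')) ⊗ Φ'`. -/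
def uMap1 (S : Q →ₗ[ℂ] Q) (bb : Q) : TP3 ℂ Q →ₗ[ℂ] TP2 ℂ Q :=
  TensorProduct.map (uInner S bb) LinearMap.id ∘ₗ (TensorProduct.comm ℂ Q (TP2 ℂ Q)).toLinearMap

/-- `R' ⊗ R'' ↦ S(R'') · al · R'`. -/
def uMap2 (S : Q →ₗ[ℂ] Q) (al : Q) : TP2 ℂ Q →ₗ[ℂ] Q :=
  mulA ℂ Q ∘ₗ TensorProduct.map (LinearMap.mulRight ℂ al ∘ₗ S) LinearMap.id ∘ₗ
    (TensorProduct.comm ℂ Q Q).toLinearMap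

/-- `(x ⊗ a) ⊗ (R' ⊗ R'') ↦ x · (S(R'') · al · R') · a`. -/
def uBig (S : Q →ₗ[ℂ] Q) (al : Q) : TP2 ℂ Q ⊗[ℂ] TP2 ℂ Q →ₗ[ℂ] Q :=
  mulA ℂ Q ∘ₗ TensorProduct.map LinearMap.id (mulA ℂ Q ∘ₗ (TensorProduct.comm ℂ Q Q).toLinearMap)
    ∘ₗ (TensorProduct.assoc ℂ Q Q Q).toLinearMap ∘ₗ TensorProduct.map LinearMap.id (uMap2 S al)

/-- The Drinfeld element `u = Σ S(Φ''·b·S(Φ'''))·S(R'')·α·R'·Φ'` (with `α = 1`). -/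
def uDrin (β : ℂ) (S : Q →ₗ[ℂ] Q) : Q :=
  uBig S 1 (uMap1 S (bbEl β) (Phi β) ⊗ₜ[ℂ] Rmat β)

/-- The balancing element `g = b · S(α) · v⁻¹ · u` (with `α = 1`). -/
def balG (β : ℂ) (S : Q →ₗ[ℂ] Q) : Q :=
  bbEl β * S 1 * Ring.inverse (vRib β) * uDrin β S

/-- The cointegral `c = (β²/i)·E·F·(1 + K + K² + K³)`. -/
def cInt (β : ℂ) : Q := (β ^ 2 / Complex.I) • (gE * gF * (1 + gK + gK ^ 2 + gK ^ 3))

/-- The q-trace of a one-dimensional representation, with balancing element `K⁻¹`. -/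
def qTr1 (ρ : Q →ₐ[ℂ] ℂ) : Q →ₗ[ℂ] ℂ := ρ.toLinearMap ∘ₗ LinearMap.mulLeft ℂ gK

/-- The q-trace of a two-dimensional (matrix) representation, with balancing element `K⁻¹`. -/
def qTrM (ρ : Q →ₐ[ℂ] Matrix (Fin 2) (Fin 2) ℂ) : Q →ₗ[ℂ] ℂ :=
  Matrix.traceLinearMap (Fin 2) ℂ ℂ ∘ₗ ρ.toLinearMap ∘ₗ LinearMap.mulLeft ℂ gK

/-- The Drinfeld mapping `φ ↦ (φ ⊗ id)(M)`. -/
def drinfeldImg (β : ℂ) (φ : Q →ₗ[ℂ] ℂ) : Q :=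
  (TensorProduct.lid ℂ Q) (TensorProduct.map φ LinearMap.id (Mmat β))

/-!
Trading `K` for the involution `H = K (e₀ - i e₁)`, which anticommutes with `E` and `F`, turns the
Cartan prefactors of all four blocks of `R` into the single element
`χ = ½ (1 + H ⊗ 1 + 1 ⊗ H - H ⊗ H)`, so `R = χ · core`. Since `χ² = 1` and `χ` is symmetric,
`M = (χ · flip(core) · χ) · core`, and conjugation by `χ` is explicit on monomials: it fixes those
commuting with `H` in both factors and multiplies those anticommuting in both by `-H ⊗ H`.
Multiplying block by block gives `M = ladder · Cartan` with a ladder part independent of the block.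

With `ω = -β²`, a primitive fourth root of unity, the Cartan part is `¼ ∑ ω^{rs} K^s ⊗ K^r`.
Substituting `ω^a K` and `ω^b K` for the two `K`s with `a + b ≡ 0 mod 4` multiplies this sum by
`ω^{b²} K^a ⊗ K^b`, which produces the powers of `K` occurring in the ladder part.
-/

section SignBicharacter

variable (k : Type*) {A : Type*} [Field k] [NeZero (2 : k)] [Ring A] [Algebra k A]

/-- For commuting involutions `u`, `v`, the element acting on the joint eigenspace
`u = (-1) ^ a`, `v = (-1) ^ b` as the bicharacter value `(-1) ^ (a * b)`. -/
def signBicharacter (u v : A) : A := (2 : k)⁻¹ • (1 + u + v - u * v)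

variable {u v y : A}

theorem signBicharacter_mul_self (hu : u * u = 1) (hv : v * v = 1) (huv : Commute u v) :
    signBicharacter k u v * signBicharacter k u v = 1 := by
  have huux (x : A) : u * (u * x) = x := by rw [← mul_assoc, hu, one_mul]
  have expand : (1 + u + v - u * v) * (1 + u + v - u * v) = (4 : k) • (1 : A) := by
    simp only [mul_add, add_mul, mul_sub, sub_mul, mul_one, one_mul, mul_assoc, hu, hv,
      huv.symm.eq, huv.symm.left_comm, huux]
    module
  have h4 : (2 : k)⁻¹ * 2⁻¹ * 4 = 1 := by field_simp; norm_num
  rw [signBicharacter, smul_mul_smul_comm, expand, smul_smul, h4, one_smul]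

theorem signBicharacter_mul_signBicharacter_neg_neg (hu : u * u = 1) (hv : v * v = 1)
    (huv : Commute u v) :
    signBicharacter k u v * signBicharacter k (-u) (-v) = -(u * v) := by
  have huux (x : A) : u * (u * x) = x := by rw [← mul_assoc, hu, one_mul]
  have expand : (1 + u + v - u * v) * (1 + -u + -v - -u * -v) = (4 : k) • -(u * v) := by
    simp only [mul_add, add_mul, mul_sub, sub_mul, mul_one, one_mul, mul_neg, neg_mul, neg_neg,
      mul_assoc, hu, hv, huv.symm.eq, huv.symm.left_comm, huux]
    module
  have h4 : (2 : k)⁻¹ * 2⁻¹ * 4 = 1 := by field_simp; norm_num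
  rw [signBicharacter, signBicharacter, smul_mul_smul_comm, expand, smul_smul, h4, one_smul]

theorem signBicharacter_conj_of_commute (hu : u * u = 1) (hv : v * v = 1) (huv : Commute u v)
    (hyu : Commute y u) (hyv : Commute y v) :
    signBicharacter k u v * y * signBicharacter k u v = y := by
  have hy : Commute y (signBicharacter k u v) :=
    ((((Commute.one_right y).add_right hyu).add_right hyv).sub_right
      (hyu.mul_right hyv)).smul_right _
  rw [← hy.eq, mul_assoc, signBicharacter_mul_self k hu hv huv, mul_one]

theorem signBicharacter_conj_of_anticommute (hu : u * u = 1) (hv : v * v = 1) (huv : Commute u v)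
    (hyu : y * u = -(u * y)) (hyv : y * v = -(v * y)) :
    signBicharacter k u v * y * signBicharacter k u v = -(u * v * y) := by
  have hy : y * signBicharacter k u v = signBicharacter k (-u) (-v) * y := by
    have hyuv : y * (u * v) = u * v * y := by
      rw [← mul_assoc, hyu, neg_mul, mul_assoc, hyv, mul_neg, neg_neg, mul_assoc]
    simp only [signBicharacter, mul_smul_comm, smul_mul_assoc, mul_add, mul_sub, add_mul, sub_mul,
      mul_one, one_mul, mul_neg, neg_mul, neg_neg, hyu, hyv, hyuv]
  rw [mul_assoc, hy, ← mul_assoc, signBicharacter_mul_signBicharacter_neg_neg k hu hv huv, neg_mul]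

end SignBicharacter

section Kernel

variable {k A : Type*} [CommSemiring k] [Semiring A] [Algebra k A]

theorem sum_range_add_one_eq {M : Type*} [AddCommMonoid M] {f : ℕ → M} {n : ℕ} (hf : f n = f 0) :
    ∑ i ∈ Finset.range n, f (i + 1) = ∑ i ∈ Finset.range n, f i := by
  cases n with
  | zero => rfl
  | succ n => rw [Finset.sum_range_succ, Finset.sum_range_succ', hf]

/-- The Fourier kernel `∑ ω ^ (r * s) • x ^ s * y ^ r` of order `n`. When `x ^ n = y ^ n = 1`,
rescaling `x` and `y` by powers of the root of unity `ω` only multiplies it by such powers and by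
powers of `x` and `y`. -/
def fourierKernel (n : ℕ) (ω : k) (x y : A) : A :=
  ∑ r ∈ Finset.range n, ∑ s ∈ Finset.range n, ω ^ (r * s) • (x ^ s * y ^ r)

variable {n : ℕ} {ω : k} {x y : A}

theorem fourierKernel_smul_left_mul (hω : ω ^ n = 1) (hy : y ^ n = 1) :
    fourierKernel n ω (ω • x) y * y = fourierKernel n ω x y := by
  let f (r : ℕ) : A := ∑ s ∈ Finset.range n, ω ^ (r * s) • (x ^ s * y ^ r)
  have hf : f n = f 0 := by
    refine Finset.sum_congr rfl fun s _ => ?_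
    rw [pow_mul, hω, one_pow, hy, zero_mul, pow_zero, pow_zero]
  rw [fourierKernel, fourierKernel]
  refine Eq.trans ?_ (sum_range_add_one_eq hf)
  simp only [Finset.sum_mul, smul_mul_assoc, smul_pow, mul_assoc, ← pow_succ, smul_smul,
    ← pow_add, Nat.succ_mul]

theorem mul_fourierKernel_smul_right (hω : ω ^ n = 1) (hx : x ^ n = 1) :
    x * fourierKernel n ω x (ω • y) = fourierKernel n ω x y := by
  let f (s : ℕ) : A := ∑ r ∈ Finset.range n, ω ^ (r * s) • (x ^ s * y ^ r)
  have hf : f n = f 0 := by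
    refine Finset.sum_congr rfl fun r _ => ?_
    rw [mul_comm, pow_mul, hω, one_pow, hx, mul_zero, pow_zero, pow_zero]
  rw [fourierKernel, fourierKernel, Finset.sum_comm,
    Finset.sum_comm (f := fun r s => ω ^ (r * s) • (x ^ s * y ^ r))]
  refine Eq.trans ?_ (sum_range_add_one_eq hf)
  simp only [Finset.mul_sum, mul_smul_comm, smul_pow, ← mul_assoc, ← pow_succ',
    smul_smul, ← pow_add, Nat.mul_succ]

theorem fourierKernel_pow_smul_left (hω : ω ^ n = 1) (hy : y ^ n = 1) {a b : ℕ}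
    (hab : n ∣ a + b) :
    fourierKernel n ω (ω ^ a • x) y = fourierKernel n ω x y * y ^ b := by
  have shift : fourierKernel n ω (ω ^ a • x) y * y ^ a = fourierKernel n ω x y := by
    clear hab
    induction a with
    | zero => rw [pow_zero, pow_zero, one_smul, mul_one]
    | succ a ih =>
      rw [pow_succ', pow_succ', mul_smul, ← mul_assoc, fourierKernel_smul_left_mul hω hy, ih]
  obtain ⟨c, hc⟩ := hab
  rw [← shift, mul_assoc, ← pow_add, hc, pow_mul, hy, one_pow, mul_one]

theorem fourierKernel_pow_smul_right (hω : ω ^ n = 1) (hx : x ^ n = 1) {a b : ℕ}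
    (hab : n ∣ a + b) :
    fourierKernel n ω x (ω ^ b • y) = x ^ a * fourierKernel n ω x y := by
  have shift : x ^ b * fourierKernel n ω x (ω ^ b • y) = fourierKernel n ω x y := by
    clear hab
    induction b with
    | zero => rw [pow_zero, pow_zero, one_smul, one_mul]
    | succ b ih =>
      rw [pow_succ' ω, pow_succ, mul_smul, mul_assoc, mul_fourierKernel_smul_right hω hx, ih]
  obtain ⟨c, hc⟩ := hab
  rw [← shift, ← mul_assoc, ← pow_add, hc, pow_mul, hx, one_pow, one_mul]

theorem fourierKernel_pow_smul_pow_smul (hω : ω ^ n = 1) (hx : x ^ n = 1) (hy : y ^ n = 1)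
    {a b : ℕ} (hab : n ∣ a + b) :
    fourierKernel n ω (ω ^ a • x) (ω ^ b • y) =
      ω ^ (b * b) • (x ^ a * fourierKernel n ω x y * y ^ b) := by
  have hy' : (ω ^ b • y) ^ n = 1 := by
    rw [smul_pow, hy, ← pow_mul, mul_comm, pow_mul, hω, one_pow, one_smul]
  rw [fourierKernel_pow_smul_left hω hy' hab, fourierKernel_pow_smul_right hω hx hab, smul_pow,
    ← pow_mul, mul_smul_comm]

end Kernel

section Idempotents

theorem sum_mul_sum_of_orthogonalIdempotents {ι R : Type*} [Fintype ι] [Semiring R]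
    {p : ι → R} (hp : OrthogonalIdempotents p) (hc : ∀ i x, Commute (p i) x) (a b : ι → R) :
    (∑ i, a i * p i) * ∑ i, b i * p i = ∑ i, a i * (b i * p i) := by
  classical
  have hterm (i j : ι) : a i * p i * (b j * p j) = if i = j then a i * (b j * p j) else 0 := by
    rw [mul_assoc, ← mul_assoc (p i), (hc i (b j)).eq, mul_assoc (b j), hp.mul_eq]
    split_ifs with h
    · rw [h]
    · rw [mul_zero, mul_zero]
  simp only [Finset.sum_mul_sum, hterm, Finset.sum_ite_eq, Finset.mem_univ, if_true]

theorem smul_mul_mul_of_commute {k A : Type*} [CommSemiring k] [Semiring A] [Algebra k A]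
    {a e x y : A} {c : k} (hex : Commute e x) (h : a * e = c • (y * e)) :
    c • (y * x) * e = a * (x * e) := by
  rw [← hex.eq, ← mul_assoc, h, smul_mul_assoc, smul_mul_assoc, mul_assoc, mul_assoc, hex.eq]

end Idempotents

section Relations

open Complex (I)

theorem gKi_mul_gK : gKi * gK = 1 := by
  simpa [gK, gKi] using RingQuot.mkAlgHom_rel ℂ QRel.KiK

theorem gK_pow_four : gK ^ 4 = 1 := by
  simpa [gK] using RingQuot.mkAlgHom_rel ℂ QRel.K4

theorem gE_mul_self : gE * gE = 0 := by
  simpa [gE, sq] using RingQuot.mkAlgHom_rel ℂ QRel.Esq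

theorem gF_mul_self : gF * gF = 0 := by
  simpa [gF, sq] using RingQuot.mkAlgHom_rel ℂ QRel.Fsq

theorem gKi_eq_gK_pow_three : gKi = gK ^ 3 := by
  calc gKi = gKi * gK ^ 4 := by rw [gK_pow_four, mul_one]
    _ = gK ^ 3 := by rw [pow_succ' gK 3, ← mul_assoc, gKi_mul_gK, one_mul]

theorem gK_mul_gE : gK * gE = (-1 : ℂ) • (gE * gK) := by
  have h : gK * gE * gKi = (-1 : ℂ) • gE := by
    have := RingQuot.mkAlgHom_rel ℂ QRel.KEKi
    rwa [← neg_one_smul ℂ, map_smul, map_mul, map_mul] at this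
  rw [← smul_mul_assoc, ← h, mul_assoc, gKi_mul_gK, mul_one]

theorem gK_mul_gF : gK * gF = (-1 : ℂ) • (gF * gK) := by
  have h : gK * gF * gKi = (-1 : ℂ) • gF := by
    have := RingQuot.mkAlgHom_rel ℂ QRel.KFKi
    rwa [← neg_one_smul ℂ, map_smul, map_mul, map_mul] at this
  rw [← smul_mul_assoc, ← h, mul_assoc, gKi_mul_gK, mul_one]

theorem gF_mul_gE : gF * gE = gE * gF + (I / 2) • (gK - gK ^ 3) := by
  have h : gE * gF - gF * gE = (2 * I)⁻¹ • (gK - gK ^ 3) := by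
    have := RingQuot.mkAlgHom_rel ℂ QRel.EF
    rw [map_sub, map_smul, map_mul, map_mul, map_sub] at this
    rw [← gKi_eq_gK_pow_three]
    exact this
  have hI : (2 * I)⁻¹ = -(I / 2) := by rw [mul_inv, Complex.inv_I]; ring
  rw [hI] at h
  have reorder : gF * gE = gE * gF - (gE * gF - gF * gE) := by rw [sub_sub_cancel]
  rw [reorder, h]
  module

theorem gK_mul_gE_mul (x : Q) : gK * (gE * x) = (-1 : ℂ) • (gE * (gK * x)) := by
  rw [← mul_assoc, gK_mul_gE, smul_mul_assoc, mul_assoc]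

theorem gK_mul_gF_mul (x : Q) : gK * (gF * x) = (-1 : ℂ) • (gF * (gK * x)) := by
  rw [← mul_assoc, gK_mul_gF, smul_mul_assoc, mul_assoc]

theorem gE_mul_gE_mul (x : Q) : gE * (gE * x) = 0 := by
  rw [← mul_assoc, gE_mul_self, zero_mul]

theorem gF_mul_gF_mul (x : Q) : gF * (gF * x) = 0 := by
  rw [← mul_assoc, gF_mul_self, zero_mul]

theorem gF_mul_gE_mul (x : Q) :
    gF * (gE * x) = gE * (gF * x) + (I / 2) • (gK * x - gK * (gK * (gK * x))) := by
  rw [← mul_assoc, gF_mul_gE, add_mul, smul_mul_assoc, sub_mul, pow_three, mul_assoc, mul_assoc,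
    mul_assoc]

theorem gK_sq_mem_center : gK ^ 2 ∈ Subalgebra.center ℂ Q := by
  have hE : Commute (gK ^ 2) gE := by
    simp [Commute, SemiconjBy, sq, mul_assoc, gK_mul_gE, gK_mul_gE_mul, smul_smul]
  have hF : Commute (gK ^ 2) gF := by
    simp [Commute, SemiconjBy, sq, mul_assoc, gK_mul_gF, gK_mul_gF_mul, smul_smul]
  have hKi : Commute (gK ^ 2) gKi := by
    rw [gKi_eq_gK_pow_three]
    exact Commute.pow_pow_self gK 2 3
  rw [Subalgebra.mem_center_iff]
  intro x
  obtain ⟨a, rfl⟩ := RingQuot.mkAlgHom_surjective ℂ QRel x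
  refine (?_ : Commute _ _).symm
  induction a using FreeAlgebra.induction with
  | grade0 c => rw [AlgHom.commutes]; exact Algebra.commute_algebraMap_right _ _
  | grade1 g => cases g with
    | E => exact hE
    | F => exact hF
    | K => exact Commute.pow_self _ _
    | Kinv => exact hKi
  | mul a b ha hb => rw [map_mul]; exact ha.mul_right hb
  | add a b ha hb => rw [map_add]; exact ha.add_right hb

theorem e0_mem_center : e0 ∈ Subalgebra.center ℂ Q :=
  Subalgebra.smul_mem _ (add_mem (one_mem _) gK_sq_mem_center) _

theorem e1_mem_center : e1 ∈ Subalgebra.center ℂ Q :=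
  Subalgebra.smul_mem _ (sub_mem (one_mem _) gK_sq_mem_center) _

theorem e0_add_e1 : e0 + e1 = 1 := by
  rw [e0, e1]; module

theorem gK_mul_gK_mul_e0 : gK * (gK * e0) = e0 := by
  rw [← mul_assoc, ← sq, e0, mul_smul_comm, mul_add, mul_one, ← pow_add, gK_pow_four, add_comm]

theorem gK_mul_gK_mul_e1 : gK * (gK * e1) = (-1 : ℂ) • e1 := by
  rw [← mul_assoc, ← sq, e1, mul_smul_comm, mul_sub, mul_one, ← pow_add, gK_pow_four]
  module

theorem e0_mul_e0 : e0 * e0 = e0 := by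
  nth_rw 1 [e0]
  rw [smul_mul_assoc, add_mul, one_mul, sq, mul_assoc, gK_mul_gK_mul_e0]
  module

theorem e0_mul_e1 : e0 * e1 = 0 := by
  rw [e0, smul_mul_assoc, add_mul, one_mul, sq, mul_assoc, gK_mul_gK_mul_e1]
  module

theorem e1_mul_e0 : e1 * e0 = 0 := by
  rw [e1, smul_mul_assoc, sub_mul, one_mul, sq, mul_assoc, gK_mul_gK_mul_e0]
  module

theorem e1_mul_e1 : e1 * e1 = e1 := by
  nth_rw 1 [e1]
  rw [smul_mul_assoc, sub_mul, one_mul, sq, mul_assoc, gK_mul_gK_mul_e1]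
  module

end Relations

section Tensor

theorem t2_mul_t2 (a b c d : Q) : t2 a b * t2 c d = t2 (a * c) (b * d) :=
  Algebra.TensorProduct.tmul_mul_tmul a c b d

theorem flipA_t2 (a b : Q) : flipA ℂ Q (t2 a b) = t2 b a :=
  TensorProduct.comm_tmul ℂ Q Q a b

theorem flipA_mul (x y : TP2 ℂ Q) : flipA ℂ Q (x * y) = flipA ℂ Q x * flipA ℂ Q y :=
  map_mul (Algebra.TensorProduct.comm ℂ Q Q) x y

theorem t2_one_one : t2 1 1 = 1 := rfl

theorem t2_add_left (a b c : Q) : t2 (a + b) c = t2 a c + t2 b c :=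
  TensorProduct.add_tmul a b c

theorem t2_add_right (a b c : Q) : t2 a (b + c) = t2 a b + t2 a c :=
  TensorProduct.tmul_add a b c

theorem t2_sub_left (a b c : Q) : t2 (a - b) c = t2 a c - t2 b c :=
  TensorProduct.sub_tmul a b c

theorem t2_sub_right (a b c : Q) : t2 a (b - c) = t2 a b - t2 a c :=
  TensorProduct.tmul_sub a b c

theorem t2_smul_left (r : ℂ) (a b : Q) : t2 (r • a) b = r • t2 a b :=
  TensorProduct.smul_tmul' r a b

theorem t2_smul_right (r : ℂ) (a b : Q) : t2 a (r • b) = r • t2 a b :=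
  TensorProduct.tmul_smul r a b

theorem t2_zero_left (b : Q) : t2 0 b = 0 :=
  TensorProduct.zero_tmul Q b

theorem t2_zero_right (a : Q) : t2 a 0 = 0 :=
  TensorProduct.tmul_zero Q a

theorem t2_mem_center {a b : Q} (ha : a ∈ Subalgebra.center ℂ Q) (hb : b ∈ Subalgebra.center ℂ Q) :
    t2 a b ∈ Subalgebra.center ℂ (TP2 ℂ Q) := by
  rw [Subalgebra.mem_center_iff] at *
  intro x
  induction x using TensorProduct.induction_on with
  | zero => rw [zero_mul, mul_zero]
  | tmul c d => exact (t2_mul_t2 c d a b).trans (by rw [ha, hb, ← t2_mul_t2]; rfl)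
  | add x y hx hy => rw [add_mul, mul_add, hx, hy]

end Tensor

section Cartan

open Complex (I)

/-- The involution `H`, equal to `K` where `K² = 1` and to `-i K` where `K² = -1`; it anticommutes
with `E` and `F`. -/
def gH : Q := gK * e0 - I • (gK * e1)

theorem gH_mul_e0 : gH * e0 = gK * e0 := by
  rw [gH, sub_mul, smul_mul_assoc, mul_assoc, mul_assoc, e0_mul_e0, e1_mul_e0, mul_zero, smul_zero,
    sub_zero]

theorem gH_mul_e1 : gH * e1 = (-I) • (gK * e1) := by
  rw [gH, sub_mul, smul_mul_assoc, mul_assoc, mul_assoc, e0_mul_e1, e1_mul_e1, mul_zero]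
  module

theorem e0_mul_comm (x : Q) : e0 * x = x * e0 := (Subalgebra.mem_center_iff.1 e0_mem_center x).symm

theorem e1_mul_comm (x : Q) : e1 * x = x * e1 := (Subalgebra.mem_center_iff.1 e1_mem_center x).symm

theorem gH_mul_gK : gH * gK = gK * gH := by
  simp only [gH, sub_mul, mul_sub, smul_mul_assoc, mul_smul_comm, mul_assoc,
    e0_mul_comm gK, e1_mul_comm gK]

theorem gH_mul_of_anticommute {a : Q} (h : gK * a = (-1 : ℂ) • (a * gK)) :
    gH * a = (-1 : ℂ) • (a * gH) := by
  simp only [gH, sub_mul, mul_sub, smul_mul_assoc, mul_smul_comm, mul_assoc,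
    e0_mul_comm a, e1_mul_comm a]
  simp only [← mul_assoc, h, smul_mul_assoc]
  module

theorem gH_mul_gH : gH * gH = 1 := by
  have h0 : gH * (gH * e0) = e0 := by
    rw [gH_mul_e0, ← mul_assoc, gH_mul_gK, mul_assoc, gH_mul_e0, gK_mul_gK_mul_e0]
  have h1 : gH * (gH * e1) = e1 := by
    rw [gH_mul_e1, mul_smul_comm, ← mul_assoc, gH_mul_gK, mul_assoc, gH_mul_e1, mul_smul_comm,
      smul_smul, neg_mul_neg, Complex.I_mul_I, gK_mul_gK_mul_e1, smul_smul]
    norm_num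
  calc gH * gH = gH * (gH * (e0 + e1)) := by rw [e0_add_e1, mul_one]
    _ = 1 := by rw [mul_add, mul_add, h0, h1, e0_add_e1]

/-- The Cartan factor common to all four blocks of `R`: written in `H` instead of `K`, the four
prefactors of the blocks coincide. -/
def rCartan : TP2 ℂ Q := signBicharacter ℂ (t2 gH 1) (t2 1 gH)

theorem t2_gH_one_sq : t2 gH 1 * t2 gH 1 = 1 := by
  rw [t2_mul_t2, gH_mul_gH, mul_one, t2_one_one]

theorem t2_one_gH_sq : t2 1 gH * t2 1 gH = 1 := by
  rw [t2_mul_t2, gH_mul_gH, mul_one, t2_one_one]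

theorem commute_t2_gH : Commute (t2 gH 1) (t2 1 gH) := by
  simp only [Commute, SemiconjBy, t2_mul_t2, mul_one, one_mul]

theorem flipA_rCartan : flipA ℂ Q rCartan = rCartan := by
  simp only [rCartan, signBicharacter, ← t2_one_one, map_smul, map_add, map_sub, flipA_t2,
    t2_mul_t2, one_mul, mul_one, add_right_comm]

theorem rCartan_conj_of_commute {a b : Q} (ha : Commute a gH) (hb : Commute b gH) :
    rCartan * t2 a b * rCartan = t2 a b := by
  refine signBicharacter_conj_of_commute ℂ t2_gH_one_sq t2_one_gH_sq commute_t2_gH ?_ ?_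
  · simp only [Commute, SemiconjBy, t2_mul_t2, mul_one, one_mul, ha.eq]
  · simp only [Commute, SemiconjBy, t2_mul_t2, mul_one, one_mul, hb.eq]

theorem rCartan_conj_of_anticommute {a b : Q} (ha : a * gH = (-1 : ℂ) • (gH * a))
    (hb : b * gH = (-1 : ℂ) • (gH * b)) :
    rCartan * t2 a b * rCartan = -t2 (gH * a) (gH * b) := by
  rw [rCartan, signBicharacter_conj_of_anticommute ℂ t2_gH_one_sq t2_one_gH_sq commute_t2_gH,
    t2_mul_t2, t2_mul_t2, one_mul, mul_one]
  · rw [t2_mul_t2, t2_mul_t2, ha, mul_one, one_mul, t2_smul_left, neg_one_smul]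
  · rw [t2_mul_t2, t2_mul_t2, hb, mul_one, one_mul, t2_smul_right, neg_one_smul]

end Cartan

section Core

open Complex (I)

theorem gH_mul_gE : gH * gE = (-1 : ℂ) • (gE * gH) :=
  gH_mul_of_anticommute gK_mul_gE

theorem gH_mul_gF : gH * gF = (-1 : ℂ) • (gF * gH) :=
  gH_mul_of_anticommute gK_mul_gF

theorem gH_mul_gE_mul (x : Q) : gH * (gE * x) = (-1 : ℂ) • (gE * (gH * x)) := by
  rw [← mul_assoc, gH_mul_gE, smul_mul_assoc, mul_assoc]

theorem gH_mul_gF_mul (x : Q) : gH * (gF * x) = (-1 : ℂ) • (gF * (gH * x)) := by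
  rw [← mul_assoc, gH_mul_gF, smul_mul_assoc, mul_assoc]

theorem gH_mul_gK_mul (x : Q) : gH * (gK * x) = gK * (gH * x) := by
  rw [← mul_assoc, gH_mul_gK, mul_assoc]

theorem gE_mul_gH : gE * gH = (-1 : ℂ) • (gH * gE) := by
  rw [gH_mul_gE, smul_smul, neg_one_mul, neg_neg, one_smul]

theorem gF_mul_gH : gF * gH = (-1 : ℂ) • (gH * gF) := by
  rw [gH_mul_gF, smul_smul, neg_one_mul, neg_neg, one_smul]

theorem eEK_mul_gH : eEK * gH = (-1 : ℂ) • (gH * eEK) := by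
  rw [eEK, mul_assoc, ← gH_mul_gK, ← mul_assoc, gE_mul_gH, smul_mul_assoc, mul_assoc]

theorem eFK_mul_gH : eFK * gH = (-1 : ℂ) • (gH * eFK) := by
  rw [eFK, mul_assoc, ← gH_mul_gK, ← mul_assoc, gF_mul_gH, smul_mul_assoc, mul_assoc]

theorem commute_gK_gH : Commute gK gH := gH_mul_gK.symm

theorem commute_eEF_gH : Commute eEF gH := by
  rw [Commute, SemiconjBy, eEF, mul_assoc, gH_mul_gE_mul, gH_mul_gF, mul_smul_comm,
    smul_smul, neg_one_mul, neg_neg, one_smul]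

theorem commute_eEFK_gH : Commute eEFK gH :=
  commute_eEF_gH.mul_left commute_gK_gH

/-- The central idempotents `e₀`, `e₁` as a family. -/
def idem : Fin 2 → Q := ![e0, e1]

/-- What remains of the block of `R` on `e_i ⊗ e_j` after splitting off its Cartan prefactor; the
scalar `β` of the block `(1, 1)` is kept here. -/
def rCoreBlock (β : ℂ) : Fin 2 → Fin 2 → TP2 ℂ Q
  | 0, 0 => t2 1 1 + (2 * I) • t2 gE gF
  | 0, 1 => t2 1 1 + (1 - I) • t2 eFK eEK - (1 - I) • t2 gE gF + (1 + I) • t2 eEFK 1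
      + (2 * I) • t2 eEFK eEFK
  | 1, 0 => t2 1 gK + (1 - I) • t2 eFK gE + (1 - I) • t2 gE eFK - (1 - I) • t2 1 eEF
      - (2 * I) • t2 eEFK eEF
  | 1, 1 => β • ((-I) • t2 gK 1 + (2 * I) • t2 eEK gF + (1 - I) • t2 gK eEFK
      - (1 + I) • t2 eEF 1 - (2 * I) • t2 eEF eEFK)

/-- The `(i, j)` block of the flipped core of `R` conjugated by the Cartan factor. -/
def rCoreBlockConj (β : ℂ) : Fin 2 → Fin 2 → TP2 ℂ Q
  | 0, 0 => t2 1 1 - (2 * I) • t2 (gH * gF) (gH * gE)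
  | 0, 1 => t2 gK 1 - (1 - I) • t2 (gH * gE) (gH * eFK) - (1 - I) • t2 (gH * eFK) (gH * gE)
      - (1 - I) • t2 eEF 1 - (2 * I) • t2 eEF eEFK
  | 1, 0 => t2 1 1 - (1 - I) • t2 (gH * eEK) (gH * eFK) + (1 - I) • t2 (gH * gF) (gH * gE)
      + (1 + I) • t2 1 eEFK + (2 * I) • t2 eEFK eEFK
  | 1, 1 => β • ((-I) • t2 1 gK - (2 * I) • t2 (gH * gF) (gH * eEK) + (1 - I) • t2 eEFK gK
      - (1 + I) • t2 1 eEF - (2 * I) • t2 eEFK eEF)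

/-- The part of the monodromy matrix `M` built from `E` and `F`; it is the same on all blocks. -/
def mLadder : TP2 ℂ Q :=
  (1 - (2 * I) • t2 eFK (gE * gK ^ 3)) * (1 + (2 * I) • t2 (gE * gK ^ 2) (gF * gK ^ 2))

/-- The part of the monodromy matrix `M` built from `K` alone. -/
def mCartan (β : ℂ) : TP2 ℂ Q :=
  t2 e0 e0 + t2 (gK * e0) e1 + t2 e1 (gK * e0) - β ^ 2 • t2 (gK * e1) (gK * e1)

theorem rCartan_conj_flipA_rCoreBlock (β : ℂ) (i j : Fin 2) :
    rCartan * flipA ℂ Q (rCoreBlock β j i) * rCartan = rCoreBlockConj β i j := by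
  fin_cases i <;> fin_cases j <;>
  simp only [rCoreBlock, rCoreBlockConj, map_add, map_sub, map_smul, flipA_t2, mul_add, mul_sub,
    add_mul, sub_mul, mul_smul_comm, smul_mul_assoc, rCartan_conj_of_commute, Commute.one_left,
    commute_gK_gH, commute_eEF_gH, commute_eEFK_gH, rCartan_conj_of_anticommute, gE_mul_gH,
    gF_mul_gH, eEK_mul_gH, eFK_mul_gH] <;>
  module

/- Moving `E` left of `F` left of `K` (or `H`) and using `H = K` on `e₀`, `H = -i K` on `e₁` brings
both sides to the same monomial basis, where scalars are compared. -/
theorem rCoreBlockConj_mul_rCoreBlock (β : ℂ) (i j : Fin 2) :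
    rCoreBlockConj β i j * (rCoreBlock β i j * t2 (idem i) (idem j)) =
      mLadder * (mCartan β * t2 (idem i) (idem j)) := by
  fin_cases i <;> fin_cases j <;>
  simp only [Fin.zero_eta, Fin.mk_one, rCoreBlock, rCoreBlockConj, mLadder, mCartan, idem,
    Matrix.cons_val_zero, Matrix.cons_val_one, eEF, eEK, eFK, eEFK, pow_three, pow_two, mul_add,
    mul_sub, add_mul, sub_mul, smul_add, smul_sub, mul_smul_comm, smul_mul_assoc, ← t2_one_one,
    t2_mul_t2, mul_assoc, one_mul, mul_one, gK_mul_gE_mul, gK_mul_gF_mul, gE_mul_gE_mul,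
    gF_mul_gF_mul, gF_mul_gE_mul, gK_mul_gK_mul_e0, gK_mul_gK_mul_e1, gH_mul_e0, gH_mul_e1,
    e0_mul_e0, e0_mul_e1, e1_mul_e0, e1_mul_e1, gH_mul_gE_mul, gH_mul_gF_mul, gH_mul_gK_mul,
    t2_smul_left, t2_smul_right, t2_add_left, t2_add_right, t2_sub_left, t2_sub_right,
    t2_zero_left, t2_zero_right, smul_zero, mul_zero, smul_smul] <;>
  match_scalars <;> grind [Complex.I_sq]

end Core

section Idem

open Complex (I)

theorem completeOrthogonalIdempotents_idem : CompleteOrthogonalIdempotents idem where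
  idem i := by
    fin_cases i
    · exact e0_mul_e0
    · exact e1_mul_e1
  ortho i j hij := by
    fin_cases i <;> fin_cases j
    · exact absurd rfl hij
    · exact e0_mul_e1
    · exact e1_mul_e0
    · exact absurd rfl hij
  complete := by
    rw [Fin.sum_univ_two]
    exact e0_add_e1

theorem idem_mem_center (i : Fin 2) : idem i ∈ Subalgebra.center ℂ Q := by
  fin_cases i
  · exact e0_mem_center
  · exact e1_mem_center

/-- The central idempotents `e_i ⊗ e_j` of `Q ⊗ Q`. -/
def idemBlock (ij : Fin 2 × Fin 2) : TP2 ℂ Q := t2 (idem ij.1) (idem ij.2)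

theorem commute_idemBlock (ij : Fin 2 × Fin 2) (x : TP2 ℂ Q) : Commute (idemBlock ij) x :=
  (Subalgebra.mem_center_iff.1 (t2_mem_center (idem_mem_center ij.1) (idem_mem_center ij.2)) x).symm

theorem completeOrthogonalIdempotents_idemBlock : CompleteOrthogonalIdempotents idemBlock where
  idem ij := by
    rw [IsIdempotentElem, idemBlock, t2_mul_t2, completeOrthogonalIdempotents_idem.idem ij.1,
      completeOrthogonalIdempotents_idem.idem ij.2]
  ortho := by
    rintro ⟨i, j⟩ ⟨k, l⟩ h
    rw [idemBlock, idemBlock, t2_mul_t2, completeOrthogonalIdempotents_idem.mul_eq,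
      completeOrthogonalIdempotents_idem.mul_eq]
    split_ifs with hik hjl
    · exact absurd (Prod.ext hik hjl) h
    · exact t2_zero_right _
    · exact t2_zero_left _
    · exact t2_zero_left _
  complete := by
    simp only [Fintype.sum_prod_type, Fin.sum_univ_two, idemBlock]
    have sum_idem : idem 0 + idem 1 = 1 := e0_add_e1
    rw [← t2_add_right, ← t2_add_right, ← t2_add_left, sum_idem, t2_one_one]

/-- The core of `R`, which is `R` with its Cartan factor split off. -/
def rCore (β : ℂ) : TP2 ℂ Q := ∑ ij, rCoreBlock β ij.1 ij.2 * idemBlock ij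

theorem rCartan_mul_e0_e0 : rCartan * t2 e0 e0 =
    (2 : ℂ)⁻¹ • ((t2 1 1 + t2 1 gK + t2 gK 1 - t2 gK gK) * t2 e0 e0) := by
  simp only [rCartan, signBicharacter, ← t2_one_one, smul_mul_assoc, add_mul, sub_mul, t2_mul_t2,
    one_mul, mul_one, gH_mul_e0]
  module

theorem rCartan_mul_e0_e1 : rCartan * t2 e0 e1 =
    (2 : ℂ)⁻¹ • ((t2 1 1 - I • t2 1 gK + t2 gK 1 + I • t2 gK gK) * t2 e0 e1) := by
  simp only [rCartan, signBicharacter, ← t2_one_one, smul_mul_assoc, add_mul, sub_mul, t2_mul_t2,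
    one_mul, mul_one, gH_mul_e0, gH_mul_e1, t2_smul_right]
  module

theorem rCartan_mul_e1_e0 : rCartan * t2 e1 e0 =
    (2 : ℂ)⁻¹ • ((t2 1 1 + t2 1 gK - I • t2 gK 1 + I • t2 gK gK) * t2 e1 e0) := by
  simp only [rCartan, signBicharacter, ← t2_one_one, smul_mul_assoc, add_mul, sub_mul, t2_mul_t2,
    one_mul, mul_one, gH_mul_e0, gH_mul_e1, t2_smul_left]
  module

theorem rCartan_mul_e1_e1 : rCartan * t2 e1 e1 =
    (2 : ℂ)⁻¹ • ((t2 1 1 - I • t2 1 gK - I • t2 gK 1 + t2 gK gK) * t2 e1 e1) := by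
  simp only [rCartan, signBicharacter, ← t2_one_one, smul_mul_assoc, add_mul, sub_mul, t2_mul_t2,
    one_mul, mul_one, gH_mul_e1, t2_smul_left, t2_smul_right, smul_smul, neg_mul_neg,
    Complex.I_mul_I]
  module

theorem Rmat_eq_rCartan_mul_rCore (β : ℂ) : Rmat β = rCartan * rCore β := by
  have h00 : R00 * t2 e0 e0 = rCartan * (rCoreBlock β 0 0 * idemBlock (0, 0)) :=
    smul_mul_mul_of_commute (commute_idemBlock (0, 0) _) rCartan_mul_e0_e0
  have h01 : R01 * t2 e0 e1 = rCartan * (rCoreBlock β 0 1 * idemBlock (0, 1)) :=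
    smul_mul_mul_of_commute (commute_idemBlock (0, 1) _) rCartan_mul_e0_e1
  have h10 : R10 * t2 e1 e0 = rCartan * (rCoreBlock β 1 0 * idemBlock (1, 0)) :=
    smul_mul_mul_of_commute (commute_idemBlock (1, 0) _) rCartan_mul_e1_e0
  have h11 : R11 β * t2 e1 e1 = rCartan * (rCoreBlock β 1 1 * idemBlock (1, 1)) := by
    rw [R11, div_eq_inv_mul, mul_smul, ← mul_smul_comm]
    exact smul_mul_mul_of_commute (commute_idemBlock (1, 1) _) rCartan_mul_e1_e1
  simp only [Rmat, rCore, Fintype.sum_prod_type, Fin.sum_univ_two, mul_add, h00, h01, h10, h11,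
    add_assoc]

theorem flipA_rCore (β : ℂ) :
    flipA ℂ Q (rCore β) = ∑ ij, flipA ℂ Q (rCoreBlock β ij.2 ij.1) * idemBlock ij := by
  rw [rCore, map_sum, ← Equiv.sum_comp (Equiv.prodComm _ _)]
  simp only [flipA_mul, idemBlock, flipA_t2, Equiv.prodComm_apply, Prod.fst_swap, Prod.snd_swap]

theorem rCartan_conj_flipA_rCore (β : ℂ) :
    rCartan * flipA ℂ Q (rCore β) * rCartan = ∑ ij, rCoreBlockConj β ij.1 ij.2 * idemBlock ij := by
  rw [flipA_rCore, Finset.mul_sum, Finset.sum_mul]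
  refine Finset.sum_congr rfl fun ij _ => ?_
  rw [mul_assoc, mul_assoc, (commute_idemBlock ij rCartan).eq, ← mul_assoc, ← mul_assoc,
    rCartan_conj_flipA_rCoreBlock]

theorem Mmat_eq_mLadder_mul_mCartan (β : ℂ) : Mmat β = mLadder * mCartan β := by
  calc Mmat β = rCartan * flipA ℂ Q (rCore β) * rCartan * rCore β := by
        rw [Mmat, Rmat_eq_rCartan_mul_rCore, flipA_mul, flipA_rCartan]
        simp only [mul_assoc]
    _ = ∑ ij, rCoreBlockConj β ij.1 ij.2 * (rCoreBlock β ij.1 ij.2 * idemBlock ij) := by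
        rw [rCartan_conj_flipA_rCore, rCore, sum_mul_sum_of_orthogonalIdempotents
          completeOrthogonalIdempotents_idemBlock.toOrthogonalIdempotents commute_idemBlock]
    _ = ∑ ij, mLadder * (mCartan β * idemBlock ij) :=
        Finset.sum_congr rfl fun ij _ => rCoreBlockConj_mul_rCoreBlock β ij.1 ij.2
    _ = mLadder * mCartan β := by
        rw [← Finset.mul_sum, ← Finset.mul_sum, completeOrthogonalIdempotents_idemBlock.complete,
          mul_one]

end Idem

section Sum

open Complex (I)

theorem t2_pow (a b : Q) (n : ℕ) : t2 a b ^ n = t2 (a ^ n) (b ^ n) :=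
  Algebra.TensorProduct.tmul_pow a b n

theorem mLadder_eq_sum : mLadder = ∑ m ∈ Finset.range 2, ∑ n ∈ Finset.range 2,
      ((-2 * I) ^ m * (2 * I) ^ n) •
        t2 (gF ^ m * gE ^ n * gK ^ (m + 2 * n)) (gE ^ m * gF ^ n * gK ^ (3 * (m + 2 * n))) := by
  have hFKE : gF * gK * (gE * gK ^ 2) = (-1 : ℂ) • (gF * gE * gK ^ 3) := by
    simp only [pow_succ', mul_assoc, gK_mul_gE_mul, mul_smul_comm]
  have hEKF : gE * gK ^ 3 * (gF * gK ^ 2) = (-1 : ℂ) • (gE * gF * gK ^ 9) := by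
    have hK9 : gK ^ 9 = gK ^ 5 := by rw [pow_add gK 4 5, gK_pow_four, one_mul]
    rw [hK9]
    simp only [pow_succ, pow_zero, one_mul, mul_assoc, gK_mul_gF_mul, mul_smul_comm]
    module
  have hK6 : gK ^ 6 = gK ^ 2 := by rw [pow_add gK 4 2, gK_pow_four, one_mul]
  simp only [Finset.sum_range_succ, Finset.sum_range_zero, mLadder, eFK, ← t2_one_one, sub_mul,
    mul_add, smul_mul_assoc, mul_smul_comm, t2_mul_t2, hFKE, hEKF, t2_smul_left,
    t2_smul_right, Nat.reduceMul, Nat.reduceAdd, hK6, pow_zero, pow_one, one_mul, mul_one]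
  module

theorem fourierKernel_eq_four_smul_mCartan {β : ℂ} (hβ : β ^ 4 = -1) :
    fourierKernel 4 (-β ^ 2) (t2 gK 1) (t2 1 gK) = (4 : ℂ) • mCartan β := by
  simp only [fourierKernel, mCartan, Finset.sum_range_succ, Finset.sum_range_zero, t2_pow, one_pow,
    t2_mul_t2, mul_one, one_mul, e0, e1, mul_smul_comm, mul_add, mul_sub, ← pow_succ',
    t2_add_left, t2_add_right, t2_sub_left, t2_sub_right, t2_smul_left, t2_smul_right,
    pow_zero, pow_one, zero_mul, mul_zero, Nat.reduceMul, Nat.reduceAdd]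
  match_scalars <;> grind

end Sum

section Coeff

open Complex (I)

theorem I_pow_mul_I_zpow {m : ℕ} (hm : m < 2) (n r s : ℕ) :
    I ^ (r * s + m * (r + s + 1)) *
        I ^ (-(m : ℤ) ^ 2 - (m : ℤ) * s + 2 * (n : ℤ) * s - 2 * (n : ℤ) * r
          - (r : ℤ) * s + (m : ℤ) * r) = (-1) ^ (m * r + n * s + 3 * (n * r)) := by
  have hmm : (m : ℤ) ^ 2 = m := by interval_cases m <;> rfl
  have hI8 : I ^ (8 * (n * r)) = 1 := by
    rw [show 8 * (n * r) = 4 * (2 * (n * r)) by ring, pow_mul, Complex.I_pow_four, one_pow]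
  rw [← Complex.I_sq, ← pow_mul, ← mul_one (_ * _), ← hI8]
  simp only [← zpow_natCast, ← zpow_add₀ Complex.I_ne_zero]
  congr 1
  push_cast
  linear_combination -hmm

theorem monodromy_coeff_eq {β : ℂ} (hβ : β ^ 4 = -1) {m : ℕ} (hm : m < 2) (n r s : ℕ) :
    (β ^ 2 / I) ^ (r * s + m * (r + s + 1)) * (2 * I) ^ (m + n) *
        I ^ (-(m : ℤ) ^ 2 - (m : ℤ) * s + 2 * (n : ℤ) * s - 2 * (n : ℤ) * r
          - (r : ℤ) * s + (m : ℤ) * r) =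
      (2 * I) ^ (m + n) * (-β ^ 2) ^ m *
        ((-β ^ 2) ^ (r * s) *
          (((-β ^ 2) ^ (3 * (m + 2 * n))) ^ r * ((-β ^ 2) ^ (m + 2 * n)) ^ s)) := by
  have hβI : β ^ 2 / I = -β ^ 2 * I := by rw [Complex.div_I]; ring
  have hω : (-β ^ 2) ^ 2 = -1 := by rw [← hβ]; ring
  rw [hβI]
  generalize -β ^ 2 = ω at hω ⊢
  rw [mul_pow ω, mul_right_comm, mul_assoc (ω ^ _), I_pow_mul_I_zpow hm, ← hω]
  ring

end Coeff

section Monodromy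

open Complex (I)

theorem pow_mul_pow_eq_neg_one_pow {ω : ℂ} (hω : ω ^ 2 = -1) {m : ℕ} (hm : m < 2) (n : ℕ) :
    ω ^ m * ω ^ (3 * (m + 2 * n) * (3 * (m + 2 * n))) = (-1) ^ m := by
  have hexp : m + 3 * (m + 2 * n) * (3 * (m + 2 * n)) =
      2 * m + 4 * (2 * m + 9 * m * n + 9 * n ^ 2) := by
    interval_cases m <;> ring
  have hω4 : ω ^ 4 = 1 := by linear_combination (ω ^ 2 - 1) * hω
  rw [← pow_add, hexp, pow_add, pow_mul, pow_mul, hω, hω4, one_pow, mul_one]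

theorem fourierKernel_smul_gK_smul_gK {β : ℂ} (hβ : β ^ 4 = -1) (a : ℕ) :
    fourierKernel 4 (-β ^ 2) ((-β ^ 2) ^ a • t2 gK 1) ((-β ^ 2) ^ (3 * a) • t2 1 gK) =
      (-β ^ 2) ^ (3 * a * (3 * a)) • (4 : ℂ) • (t2 (gK ^ a) (gK ^ (3 * a)) * mCartan β) := by
  have hω : (-β ^ 2) ^ 4 = 1 := by linear_combination (β ^ 4 - 1) * hβ
  have hx : t2 gK 1 ^ 4 = 1 := by rw [t2_pow, gK_pow_four, one_pow, t2_one_one]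
  have hy : t2 1 gK ^ 4 = 1 := by rw [t2_pow, gK_pow_four, one_pow, t2_one_one]
  have hcomm : Commute (mCartan β) (t2 1 gK ^ (3 * a)) := by
    refine Commute.pow_right ?_ _
    simp only [Commute, SemiconjBy, mCartan, add_mul, sub_mul, mul_add, mul_sub, smul_mul_assoc,
      mul_smul_comm, t2_mul_t2, mul_one, one_mul, e0_mul_comm gK, e1_mul_comm gK, mul_assoc]
  rw [fourierKernel_pow_smul_pow_smul hω hx hy ⟨a, by ring⟩,
    fourierKernel_eq_four_smul_mCartan hβ, mul_smul_comm, smul_mul_assoc,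
    mul_assoc (t2 gK 1 ^ a), hcomm.eq, ← mul_assoc (t2 gK 1 ^ a), t2_pow, t2_pow, one_pow, one_pow,
    t2_mul_t2, mul_one, one_mul]

theorem sum_monodromy_term_eq_fourierKernel {β : ℂ} (hβ : β ^ 4 = -1) {m : ℕ} (hm : m < 2)
    (n : ℕ) :
    ∑ r ∈ Finset.range 4, ∑ s ∈ Finset.range 4,
        ((β ^ 2 / I) ^ (r * s + m * (r + s + 1)) * (2 * I) ^ (m + n) *
          I ^ (-(m : ℤ) ^ 2 - (m : ℤ) * s + 2 * (n : ℤ) * s - 2 * (n : ℤ) * r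
            - (r : ℤ) * s + (m : ℤ) * r)) •
          t2 (gF ^ m * gE ^ n * gK ^ s) (gE ^ m * gF ^ n * gK ^ r) =
      ((2 * I) ^ (m + n) * (-β ^ 2) ^ m) • (t2 (gF ^ m * gE ^ n) (gE ^ m * gF ^ n) *
        fourierKernel 4 (-β ^ 2) ((-β ^ 2) ^ (m + 2 * n) • t2 gK 1)
          ((-β ^ 2) ^ (3 * (m + 2 * n)) • t2 1 gK)) := by
  simp only [fourierKernel, Finset.mul_sum, Finset.smul_sum, smul_pow, t2_pow, one_pow,
    smul_mul_assoc, mul_smul_comm, smul_smul, t2_mul_t2, mul_one, one_mul,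
    monodromy_coeff_eq hβ hm]

theorem sum_monodromy_term_eq {β : ℂ} (hβ : β ^ 4 = -1) {m : ℕ} (hm : m < 2)
    (n : ℕ) :
    ∑ r ∈ Finset.range 4, ∑ s ∈ Finset.range 4,
        ((β ^ 2 / I) ^ (r * s + m * (r + s + 1)) * (2 * I) ^ (m + n) *
          I ^ (-(m : ℤ) ^ 2 - (m : ℤ) * s + 2 * (n : ℤ) * s - 2 * (n : ℤ) * r
            - (r : ℤ) * s + (m : ℤ) * r)) •
          t2 (gF ^ m * gE ^ n * gK ^ s) (gE ^ m * gF ^ n * gK ^ r) =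
      (4 : ℂ) • (((-2 * I) ^ m * (2 * I) ^ n) •
        t2 (gF ^ m * gE ^ n * gK ^ (m + 2 * n)) (gE ^ m * gF ^ n * gK ^ (3 * (m + 2 * n))) *
          mCartan β) := by
  have hω : (-β ^ 2) ^ 2 = -1 := by rw [← hβ]; ring
  have hcoeff : (2 * I) ^ (m + n) * (-β ^ 2) ^ m *
      (-β ^ 2) ^ (3 * (m + 2 * n) * (3 * (m + 2 * n))) = (-2 * I) ^ m * (2 * I) ^ n := by
    rw [mul_assoc, pow_mul_pow_eq_neg_one_pow hω hm, neg_mul, neg_pow (2 * I)]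
    ring
  rw [sum_monodromy_term_eq_fourierKernel hβ hm, fourierKernel_smul_gK_smul_gK hβ, mul_smul_comm,
    smul_smul, hcoeff, mul_smul_comm, ← mul_assoc, t2_mul_t2, smul_mul_assoc]
  exact smul_comm _ _ _

end Monodromy

/-- the explicit formula for the monodromy matrix `M = R₂₁·R`. -/
theorem statement17 (β : ℂ) (hβ : β ^ 4 = -1) :
    Mmat β = (4:ℂ)⁻¹ •
      ∑ m ∈ Finset.range 2, ∑ n ∈ Finset.range 2,
        ∑ r ∈ Finset.range 4, ∑ s ∈ Finset.range 4,
          ((β ^ 2 / Complex.I) ^ (r * s + m * (r + s + 1)) *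
            (2 * Complex.I) ^ (m + n) *
            Complex.I ^ (-(m:ℤ) ^ 2 - (m:ℤ) * s + 2 * (n:ℤ) * s - 2 * (n:ℤ) * r
              - (r:ℤ) * s + (m:ℤ) * r)) •
          t2 (gF ^ m * gE ^ n * gK ^ s) (gE ^ m * gF ^ n * gK ^ r) := by
  rw [Mmat_eq_mLadder_mul_mCartan, mLadder_eq_sum, Finset.sum_mul, Finset.smul_sum]
  refine Finset.sum_congr rfl fun m hm => ?_
  rw [Finset.sum_mul, Finset.smul_sum]
  refine Finset.sum_congr rfl fun n _ => ?_
  rw [sum_monodromy_term_eq hβ (Finset.mem_range.1 hm), inv_smul_smul₀ (by norm_num)]
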